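/- arXiv:2212.07198 — 2 statements merged into one kernel-verified Lean document; each statement's English description precedes it below -/
import Mathlib

section
/- Let L ≥ 2 and let a, a₁, …, a_{L−1} be positive integers with a ≥ 3. Let x > 1 be the real number whose continued fraction expansion is the eventually periodic expansion x = [a; \overline{a₁, …, a_{L−1}, a, a_{L−1}, …, a₁, 2a}] (the period as written, not necessarily minimal). Write R = q_{L−1}(a₁, …, a_{L−1}), S = q_{L−2}(a₁, …, a_{L−2}), T = q_{L−2}(a₂, …, a_{L−1}), U = q_{L−3}(a₂, …, a_{L−2}). Then x² = a² + 2a·T/R + (T² + 2·(−1)^{L−1})/R² + 2·(−1)^{L−1}·(T − 2S)/(R²·(aR + 2S)). -/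
/-- The sequence of complete quotients of the continued fraction of `x`:
`α₀ = x`, `α_{k+1} = 1/(αₖ - ⌊αₖ⌋)`. -/
noncomputable def cfAlpha (x : ℝ) : ℕ → ℝ
  | 0 => x
  | k + 1 => 1 / (cfAlpha x k - (⌊cfAlpha x k⌋ : ℝ))

/-- The partial quotients of the continued fraction of `x`: `aₖ = ⌊αₖ⌋`. -/
noncomputable def cfA (x : ℝ) (k : ℕ) : ℤ :=
  ⌊cfAlpha x k⌋

/-- The length of the minimal period of the continued fraction of `x`:
the least `l > 0` with `a_{k+l} = a_k` for all `k ≥ 1`. -/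
noncomputable def cfPeriod (x : ℝ) : ℕ :=
  sInf {l : ℕ | 0 < l ∧ ∀ k : ℕ, 1 ≤ k → cfA x (k + l) = cfA x k}
/-- Shifted continuant polynomials: `contq x (n+1) = qₙ(x 1, …, x n)`, where
`q₋₁ = 0`, `q₀ = 1`, and `qₙ = xₙ·q_{n−1} + q_{n−2}`.  Thus `contq x 0 = q₋₁ = 0`
and `contq x 1 = q₀ = 1`. -/
def contq (x : ℕ → ℤ) : ℕ → ℤ
  | 0 => 0
  | 1 => 1
  | n + 2 => x (n + 1) * contq x (n + 1) + contq x n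

/-!
Let `b` be the partial quotient in the middle of the period. The expansion of `x` passes through
the word `c₁, …, c_{L-1}` twice, once forwards from `x - a` to `w = α_L` and once backwards from
`w - b` to `α_{2L} = x + a`. The error formula `(qₙ t - pₙ) (qₙ αₙ₊₁ + qₙ₋₁) = (-1)ⁿ` for
`t = [0; c₁, …, cₙ, αₙ₊₁]`, applied to both passages, gives
`(R (x - a) - T) (R w + S) = (-1)^(L-1)` and `(R (w - b) - S) (R (x + a) + T) = (-1)^(L-1)`,
because reversing a word does not change its continuant. Eliminating `w` leaves a relation in which
`x` occurs only as `x ^ 2`.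
-/

section CompleteQuotients

lemma cfAlpha_cfAlpha (x : ℝ) (m n : ℕ) : cfAlpha (cfAlpha x m) n = cfAlpha x (m + n) := by
  induction n with
  | zero => rfl
  | succ n ih => rw [← Nat.add_assoc, cfAlpha, cfAlpha, ih]

lemma cfA_cfAlpha (x : ℝ) (m n : ℕ) : cfA (cfAlpha x m) n = cfA x (m + n) := by
  simp only [cfA, cfAlpha_cfAlpha]

lemma convergent_eq_of_cfA_eq {x y : ℝ} (h : cfA x = cfA y) (n : ℕ) :
    x.convergent n = y.convergent n := by
  have floor_eq : ⌊x⌋ = ⌊y⌋ := congrFun h 0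
  induction n generalizing x y with
  | zero => rw [Real.convergent_zero, Real.convergent_zero, floor_eq]
  | succ n ih =>
    have inv_fract (z : ℝ) : (Int.fract z)⁻¹ = cfAlpha z 1 := (one_div _).symm
    have tail_eq : cfA (cfAlpha x 1) = cfA (cfAlpha y 1) := by
      funext k
      rw [cfA_cfAlpha, cfA_cfAlpha, h]
    rw [Real.convergent_succ, Real.convergent_succ, inv_fract, inv_fract, floor_eq,
      ih tail_eq (congrFun tail_eq 0)]

theorem cfA_injective : Function.Injective cfA := by
  intro x y h
  have convs_eq : (GenContFract.of x).convs = (GenContFract.of y).convs := by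
    funext n
    rw [Real.convs_eq_convergent, Real.convs_eq_convergent, convergent_eq_of_cfA_eq h]
  exact tendsto_nhds_unique (GenContFract.of_convergence x)
    (convs_eq ▸ GenContFract.of_convergence y)

lemma cfAlpha_eq_of_cfA_add_eq {x : ℝ} {m n : ℕ} (h : ∀ k, cfA x (m + k) = cfA x (n + k)) :
    cfAlpha x m = cfAlpha x n :=
  cfA_injective <| funext fun k => by rw [cfA_cfAlpha, cfA_cfAlpha, h]

lemma cfAlpha_sub_cfA_mul_cfAlpha_succ {x : ℝ} {k : ℕ} (h : 0 < cfA x (k + 1)) :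
    (cfAlpha x k - cfA x k) * cfAlpha x (k + 1) = 1 := by
  have one_le : 1 ≤ cfAlpha x (k + 1) := Int.floor_pos.mp h
  refine mul_one_div_cancel fun fract_eq_zero => ?_
  rw [cfAlpha, ← cfA, fract_eq_zero] at one_le
  norm_num at one_le

lemma cfAlpha_sub_cfA_eq_of_periodic {x : ℝ} {p : ℕ}
    (hp : Function.Periodic (fun k => cfA x (k + 1)) p) :
    cfAlpha x p - cfA x p = x - cfA x 0 := by
  have cfAlpha_succ_eq : cfAlpha x (p + 1) = cfAlpha x 1 :=
    cfAlpha_eq_of_cfA_add_eq fun k => by grind [hp k]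
  simpa only [cfAlpha, cfA, one_div, inv_inj] using cfAlpha_succ_eq

end CompleteQuotients

section Continuants

lemma contq_add_two (c : ℕ → ℤ) (n : ℕ) :
    contq c (n + 2) = c (n + 1) * contq c (n + 1) + contq c n := rfl

lemma contq_nonneg_and_pos {c : ℕ → ℤ} {n : ℕ} (hc : ∀ i, 1 ≤ i → i ≤ n → 0 < c i) :
    0 ≤ contq c n ∧ 0 < contq c (n + 1) := by
  induction n with
  | zero => simp [contq]
  | succ n ih =>
    obtain ⟨nonneg, pos⟩ := ih fun i h1 hi => hc i h1 (by lia)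
    exact ⟨pos.le, add_pos_of_pos_of_nonneg (mul_pos (hc (n + 1) (by lia) le_rfl) pos) nonneg⟩

lemma contq_denominators_ne_zero {c : ℕ → ℤ} {L : ℕ} {b : ℤ} (hL : 1 ≤ L) (hb : 0 < b)
    (hc : ∀ i, 1 ≤ i → i ≤ L - 1 → 0 < c i) :
    (contq c L : ℝ) ≠ 0 ∧ (b * contq c L + 2 * contq c (L - 1) : ℝ) ≠ 0 := by
  obtain ⟨nonneg, pos⟩ := contq_nonneg_and_pos hc
  rw [Nat.sub_add_cancel hL] at pos
  have mul_contq_pos : 0 < b * contq c L := mul_pos hb pos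
  exact ⟨mod_cast pos.ne', mod_cast (by lia : b * contq c L + 2 * contq c (L - 1) ≠ 0)⟩

lemma contq_add_two_left (c : ℕ → ℤ) : ∀ n,
    contq c (n + 2) = c 1 * contq (fun i => c (i + 1)) (n + 1) + contq (fun i => c (i + 2)) n
  | 0 => by simp [contq]
  | 1 => by simp [contq, mul_comm]
  | n + 2 => by
    rw [contq_add_two, contq_add_two_left c (n + 1), contq_add_two_left c n]
    simp only [contq_add_two]
    ring

theorem contq_reflect (c : ℕ → ℤ) : ∀ m n,
    contq (fun i => c (m + n - i)) n = contq (fun i => c (m + i)) n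
  | _, 0 => rfl
  | _, 1 => rfl
  | m, n + 2 => calc
    contq (fun i => c (m + (n + 2) - i)) (n + 2)
    _ = c (m + 1) * contq (fun i => c (m + 1 + (n + 1) - i)) (n + 1)
          + contq (fun i => c (m + 2 + n - i)) n := by grind [contq]
    _ = c (m + 1) * contq (fun i => c (m + 1 + i)) (n + 1) + contq (fun i => c (m + 2 + i)) n := by
      rw [contq_reflect c (m + 1) (n + 1), contq_reflect c (m + 2) n]
    _ = contq (fun i => c (m + i)) (n + 2) := by grind [contq_add_two_left]

section ErrorFormula

variable {A : Type*} [CommRing A] {c : ℕ → ℤ}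

lemma contq_mul_add_contq_succ {w w' : A} {n : ℕ} (hw : (w - c (n + 1)) * w' = 1) :
    contq c (n + 2) * w' + contq c (n + 1) = w' * (contq c (n + 1) * w + (contq c n : A)) := by
  rw [contq_add_two]
  push_cast
  linear_combination -(contq c (n + 1) : A) * hw

lemma mul_contq_mul_sub_contq {w : ℕ → A} {t : A} {n : ℕ} (ht : t * w 1 = 1)
    (hw : ∀ i ≤ n, (w (i + 1) - c (i + 1)) * w (i + 2) = 1) :
    w (n + 2) * (contq c (n + 2) * t - contq (fun i => c (i + 1)) (n + 1)) =
      -(contq c (n + 1) * t - contq (fun i => c (i + 1)) n) := by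
  induction n with
  | zero =>
    simp only [contq]
    push_cast
    linear_combination w 2 * ht - t * hw 0 le_rfl
  | succ n ih =>
    rw [contq_add_two c, contq_add_two fun i => c (i + 1)]
    push_cast
    linear_combination w (n + 3) * ih (fun i hi => hw i (by lia)) -
      (contq c (n + 2) * t - contq (fun i => c (i + 1)) (n + 1)) * hw (n + 1) le_rfl

theorem contq_error_formula {w : ℕ → A} {t : A} {n : ℕ} (ht : t * w 1 = 1)
    (hw : ∀ i < n, (w (i + 1) - c (i + 1)) * w (i + 2) = 1) :
    (contq c (n + 1) * t - contq (fun i => c (i + 1)) n) *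
      (contq c (n + 1) * w (n + 1) + contq c n) = (-1) ^ n := by
  induction n with
  | zero => simp [contq, ht]
  | succ n ih =>
    rw [contq_mul_add_contq_succ (hw n n.lt_succ_self)]
    linear_combination -ih (fun i hi => hw i (by lia)) +
      (contq c (n + 1) * w (n + 1) + contq c n) *
        mul_contq_mul_sub_contq ht fun i hi => hw i (Nat.lt_succ_of_le hi)

end ErrorFormula

variable {c : ℕ → ℤ} {x : ℝ} {n : ℕ}

theorem cf_error_formula (hpos : ∀ i ≤ n, 0 < cfA x (i + 1))
    (hc : ∀ i < n, cfA x (i + 1) = c (i + 1)) :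
    (contq c (n + 1) * (x - cfA x 0) - contq (fun i => c (i + 1)) n) *
      (contq c (n + 1) * cfAlpha x (n + 1) + contq c n) = (-1) ^ n :=
  contq_error_formula (cfAlpha_sub_cfA_mul_cfAlpha_succ (hpos 0 n.zero_le)) fun i hi => by
    rw [← hc i hi]
    exact cfAlpha_sub_cfA_mul_cfAlpha_succ (hpos (i + 1) hi)

theorem cf_error_formula_reverse (hpos : ∀ i ≤ n, 0 < cfA x (i + 1))
    (hc : ∀ i < n, cfA x (i + 1) = c (n - i)) :
    (contq c (n + 1) * (x - cfA x 0) - contq c n) *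
      (contq c (n + 1) * cfAlpha x (n + 1) + contq (fun i => c (i + 1)) n) = (-1) ^ n := by
  have reflect_full : contq (fun i => c (n + 1 - i)) (n + 1) = contq c (n + 1) := by
    simpa using contq_reflect c 0 (n + 1)
  have reflect_init : contq (fun i => c (n + 1 - (i + 1))) n = contq c n := by
    simpa using contq_reflect c 0 n
  have reflect_tail : contq (fun i => c (n + 1 - i)) n = contq (fun i => c (i + 1)) n := by
    simpa [add_comm] using contq_reflect c 1 n
  have formula := cf_error_formula (c := fun i => c (n + 1 - i)) hpos fun i hi => by simp [hc i hi]
  rwa [reflect_full, reflect_init, reflect_tail] at formula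

end Continuants

section MirrorSequence

/-- The periodic sequence of partial quotients with period `(c₁, …, c_{L-1}, b, c_{L-1}, …, c₁, e)`,
indexed from `k = 1`; by truncated subtraction the value at `k = 0` is the one at `k = 1`. -/
def mirrorSeq (L : ℕ) (c : ℕ → ℤ) (b e : ℤ) (k : ℕ) : ℤ :=
  (fun j : ℕ => if j < L then c j else if j = L then b
    else if j < 2 * L then c (2 * L - j) else e) ((k - 1) % (2 * L) + 1)

variable {L : ℕ} {c : ℕ → ℤ} {b e : ℤ}

lemma mirrorSeq_eq_of_le {k : ℕ} (hk : 1 ≤ k) (hkL : k ≤ 2 * L) :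
    mirrorSeq L c b e k = if k < L then c k else if k = L then b
      else if k < 2 * L then c (2 * L - k) else e := by
  rw [mirrorSeq, Nat.mod_eq_of_lt (by lia), Nat.sub_add_cancel hk]

lemma mirrorSeq_of_lt {k : ℕ} (hk : 1 ≤ k) (hkL : k < L) : mirrorSeq L c b e k = c k := by
  grind [mirrorSeq_eq_of_le]

lemma mirrorSeq_self (hL : 1 ≤ L) : mirrorSeq L c b e L = b := by
  grind [mirrorSeq_eq_of_le]

lemma mirrorSeq_add_of_lt {k : ℕ} (hk : 1 ≤ k) (hkL : k < L) :
    mirrorSeq L c b e (L + k) = c (L - k) := by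
  have reflect_index : 2 * L - (L + k) = L - k := by lia
  grind [mirrorSeq_eq_of_le]

lemma mirrorSeq_two_mul (hL : 1 ≤ L) : mirrorSeq L c b e (2 * L) = e := by
  grind [mirrorSeq_eq_of_le]

lemma mirrorSeq_periodic : Function.Periodic (fun k => mirrorSeq L c b e (k + 1)) (2 * L) := by
  intro k
  simp only [mirrorSeq, Nat.add_sub_cancel, Nat.add_mod_right]

lemma mirrorSeq_pos (hL : 1 ≤ L) (hc : ∀ i, 1 ≤ i → i ≤ L - 1 → 0 < c i) (hb : 0 < b)
    (he : 0 < e) (k : ℕ) : 0 < mirrorSeq L c b e k := by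
  have mod_lt : (k - 1) % (2 * L) < 2 * L := Nat.mod_lt _ (by lia)
  grind [mirrorSeq]

end MirrorSequence

/- With `P = R (x - a) - T`, `Q = R (x + a) + T` and `W = R w + S` the hypotheses say `P W = ε` and
`(W - D) Q = ε`, where `D = b R + 2 S`; hence `D P Q = ε (Q - P)`. -/
lemma sq_eq_of_mul_eq {K : Type*} [Field K] {x a b w R S T ε : K} (hR : R ≠ 0)
    (hD : b * R + 2 * S ≠ 0) (front : (R * (x - a) - T) * (R * w + S) = ε)
    (back : (R * (w - b) - S) * (R * (x + a) + T) = ε) :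
    x ^ 2 = (a + T / R) ^ 2 + 2 * ε * (a * R + T) / (R ^ 2 * (b * R + 2 * S)) := by
  have key : (b * R + 2 * S) * ((R * x) ^ 2 - (a * R + T) ^ 2) = 2 * ε * (a * R + T) := by
    linear_combination (R * (x + a) + T) * front - (R * (x - a) - T) * back
  rw [← key, mul_comm (R ^ 2), mul_div_mul_left _ _ hD]
  field_simp
  ring

theorem stmt_11_general {L : ℕ} (hL : 1 ≤ L) {a b : ℤ} (ha : 0 < a) (hb : 0 < b)
    {c : ℕ → ℤ} (hc : ∀ i, 1 ≤ i → i ≤ L - 1 → 0 < c i) {x : ℝ} (hx0 : cfA x 0 = a)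
    (hper : ∀ k, 1 ≤ k → cfA x k = mirrorSeq L c b (2 * a) k) :
    x ^ 2 = (a + contq (fun i => c (i + 1)) (L - 1) / contq c L : ℝ) ^ 2
      + 2 * (-1) ^ (L - 1) * (a * contq c L + contq (fun i => c (i + 1)) (L - 1))
        / (contq c L ^ 2 * (b * contq c L + 2 * contq c (L - 1))) := by
  obtain ⟨n, rfl⟩ : ∃ n, L = n + 1 := ⟨L - 1, by lia⟩
  rw [Nat.add_sub_cancel] at hc ⊢
  have cfA_succ (k : ℕ) : cfA x (k + 1) = mirrorSeq (n + 1) c b (2 * a) (k + 1) :=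
    hper _ k.succ_pos
  have cfA_pos (k : ℕ) : 0 < cfA x (k + 1) := by
    rw [cfA_succ]
    exact mirrorSeq_pos hL hc hb (by lia) _
  have last : cfAlpha x (2 * (n + 1)) = x + a := by
    have shift := cfAlpha_sub_cfA_eq_of_periodic (x := x) (p := 2 * (n + 1)) fun k => by
      simpa only [cfA_succ] using mirrorSeq_periodic k
    rw [hper _ (by lia), mirrorSeq_two_mul hL, hx0] at shift
    push_cast at shift
    linear_combination shift
  have front := cf_error_formula (fun i (_ : i ≤ n) => cfA_pos i) fun i hi => by
    rw [cfA_succ, mirrorSeq_of_lt i.succ_pos (Nat.succ_lt_succ hi)]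
  have back := cf_error_formula_reverse (x := cfAlpha x (n + 1)) (c := c) (n := n)
    (fun i _ => by rw [cfA_cfAlpha]; exact cfA_pos _) fun i hi => by
    rw [cfA_cfAlpha, hper _ (by lia), mirrorSeq_add_of_lt i.succ_pos (Nat.succ_lt_succ hi),
      Nat.succ_sub_succ]
  rw [hx0] at front
  rw [cfA_cfAlpha, cfAlpha_cfAlpha, ← two_mul, last, add_zero, hper _ hL, mirrorSeq_self hL] at back
  obtain ⟨hR, hD⟩ := contq_denominators_ne_zero hL hb hc
  exact sq_eq_of_mul_eq hR hD front back

theorem stmt_11 (L : ℕ) (hL : 2 ≤ L) (a : ℤ) (ha : 3 ≤ a) (c : ℕ → ℤ)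
    (hc : ∀ i : ℕ, 1 ≤ i → i ≤ L - 1 → 0 < c i)
    (x : ℝ) (hx : 1 < x) (hx0 : cfA x 0 = a)
    -- the partial quotients of x are periodic with the (not necessarily minimal)
    -- period (a₁, …, a_{L−1}, a, a_{L−1}, …, a₁, 2a) of length 2L
    (hper : ∀ k : ℕ, 1 ≤ k → cfA x k =
      (fun j : ℕ => if j < L then c j else if j = L then a
        else if j < 2 * L then c (2 * L - j) else 2 * a) ((k - 1) % (2 * L) + 1)) :
    x ^ 2 =
      (a : ℝ) ^ 2
        + 2 * (a : ℝ) * (contq (fun i => c (i + 1)) (L - 1) : ℝ) / (contq c L : ℝ)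
        + ((contq (fun i => c (i + 1)) (L - 1) : ℝ) ^ 2 + 2 * (-1 : ℝ) ^ (L - 1))
            / (contq c L : ℝ) ^ 2
        + 2 * (-1 : ℝ) ^ (L - 1)
            * ((contq (fun i => c (i + 1)) (L - 1) : ℝ) - 2 * (contq c (L - 1) : ℝ))
            / ((contq c L : ℝ) ^ 2
                * ((a : ℝ) * (contq c L : ℝ) + 2 * (contq c (L - 1) : ℝ))) := by
  obtain ⟨hR, hD⟩ := contq_denominators_ne_zero (b := a) (by lia) (by lia) hc
  rw [stmt_11_general (by lia) (by lia) (by lia) hc hx0 hper]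
  field_simp
  ring
end

section
/- There exists a constant C > 0 such that for every integer m ≥ 2, the period length T_{p_m} of the continued fraction expansion of √(p_m) satisfies T_{p_m} ≤ C·√m·(log m)^{3/2}, where p_m denotes the m-th prime number. -/
/-!
For irrational `√D`, all complete quotients of `√D` after the first are reduced surds
`(P + √D) / Q`. The complete quotient map is injective on this finite set, hence permutes it, so
the period of `√D` is at most the number of reduced surds. Here `0 < Q < 2√D`, and `P` is a square
root of `D` modulo `Q` lying in a prescribed window of length `Q`. For squarefree `D` there are at
most `2 d(Q)` such square roots, where `d` counts divisors: fixing one root `x₀`, the map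
`x ↦ gcd (Q, x - x₀)` has fibres of size at most `2`. Summing `d(Q)` over `Q < 2√D` bounds the
period by a multiple of `√D log D`, and Chebyshev's bound `p_m ≪ m log m` concludes.
-/

open Finset Function
open scoped Nat.Prime

section GCD

lemma mul_dvd_gcd_mul {M : Type*} [CommMonoidWithZero M] [GCDMonoid M] {d e z : M} (hd : d ∣ z)
    (he : e ∣ z) : d * e ∣ GCDMonoid.gcd d e * z :=
  (gcd_mul_right' z d e).dvd_iff_dvd_right.1
    (dvd_gcd (mul_dvd_mul_left d he) (mul_comm d e ▸ mul_dvd_mul_left e hd))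

lemma dvd_of_sq_dvd_sq_mul_squarefree {M : Type*} [CommMonoidWithZero M]
    [GCDMonoid M] {D g a : M} (hD : Squarefree D) (h : g ^ 2 ∣ a ^ 2 * D) : g ∣ a := by
  obtain ⟨g', a', hg, ha, hunit⟩ := _root_.extract_gcd g a
  rcases eq_or_ne (GCDMonoid.gcd g a) 0 with h0 | h0
  · exact ((gcd_eq_zero_iff g a).1 h0).2 ▸ dvd_zero g
  have hdvd : g' ^ 2 ∣ a' ^ 2 * D := by
    have h' : (GCDMonoid.gcd g a * g') ^ 2 ∣ (GCDMonoid.gcd g a * a') ^ 2 * D := by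
      rwa [← hg, ← ha]
    rw [mul_pow, mul_pow, mul_assoc] at h'
    exact (mul_dvd_mul_iff_left (pow_ne_zero 2 h0)).1 h'
  have hcop : IsRelPrime (g' ^ 2) (a' ^ 2) := (gcd_isUnit_iff_isRelPrime.1 hunit).pow
  have hg' : IsUnit g' := hD g' (sq g' ▸ hcop.dvd_of_dvd_mul_left hdvd)
  rw [hg, hg'.mul_right_dvd]
  exact gcd_dvd_right g a

/-- Writing `d` for the common gcd and `Q = d * e`, both `d` and `e` divide `x₁ - x₂`, while
`gcd d e` divides `2` because its square divides `4 * D`. -/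
lemma dvd_two_mul_sub_of_gcd_eq {R : Type*} [CommRing R] [GCDMonoid R]
    {D Q x₀ x₁ x₂ : R} (hD : Squarefree D) (hQ : Q ≠ 0) (h₀ : Q ∣ D - x₀ ^ 2) (h₁ : Q ∣ D - x₁ ^ 2)
    (h₂ : Q ∣ D - x₂ ^ 2) (hgcd : GCDMonoid.gcd Q (x₁ - x₀) = GCDMonoid.gcd Q (x₂ - x₀)) :
    Q ∣ 2 * (x₁ - x₂) := by
  obtain ⟨e, he⟩ := gcd_dvd_left Q (x₁ - x₀)
  have hd₁ := gcd_dvd_right Q (x₁ - x₀)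
  have hd₂ := hgcd ▸ gcd_dvd_right Q (x₂ - x₀)
  have e_dvd_add {x : R} (hx : Q ∣ D - x ^ 2)
      (hgx : GCDMonoid.gcd Q (x₁ - x₀) = GCDMonoid.gcd Q (x - x₀)) : e ∣ x + x₀ := by
    have hprod : Q ∣ (x - x₀) * (x + x₀) := by
      convert dvd_sub h₀ hx using 1
      ring
    have hcancel : GCDMonoid.gcd Q (x₁ - x₀) * e ∣ GCDMonoid.gcd Q (x₁ - x₀) * (x + x₀) := by
      rw [← he, hgx]
      exact dvd_gcd_mul_of_dvd_mul hprod
    exact (mul_dvd_mul_iff_left fun h => hQ (zero_dvd_iff.1 (h ▸ gcd_dvd_left _ _))).1 hcancel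
  set d := GCDMonoid.gcd Q (x₁ - x₀)
  have hd : d ∣ x₁ - x₂ := by simpa using dvd_sub hd₁ hd₂
  have he₁ := e_dvd_add h₁ rfl
  have he' : e ∣ x₁ - x₂ := by simpa using dvd_sub he₁ (e_dvd_add h₂ hgcd)
  have hgcd_two : GCDMonoid.gcd d e ∣ 2 := by
    have hx₀ : GCDMonoid.gcd d e ∣ 2 * x₀ := by
      convert dvd_sub ((gcd_dvd_right d e).trans he₁) ((gcd_dvd_left d e).trans hd₁) using 1
      ring
    have hsq : GCDMonoid.gcd d e ^ 2 ∣ Q := by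
      rw [he, sq]
      exact mul_dvd_mul (gcd_dvd_left d e) (gcd_dvd_right d e)
    apply dvd_of_sq_dvd_sq_mul_squarefree hD
    convert dvd_add (pow_dvd_pow_of_dvd hx₀ 2) ((hsq.trans h₀).mul_left (2 ^ 2)) using 1
    ring
  rw [he]
  exact (mul_dvd_gcd_mul hd he').trans (mul_dvd_mul_right hgcd_two _)

end GCD

section Counting

lemma card_filter_nsmul_eq_nsmul_le {A : Type*} [AddCommGroup A] [IsAddCyclic A] [Fintype A]
    [DecidableEq A] {n : ℕ} (hn : 0 < n) (c : A) : #{x : A | n • x = n • c} ≤ n :=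
  calc #{x : A | n • x = n • c} ≤ #{y : A | n • y = 0} :=
        card_le_card_of_injOn (· - c) (by simp [Set.MapsTo, smul_sub, sub_eq_zero]) (by simp)
    _ ≤ n := IsAddCyclic.card_nsmul_eq_zero_le hn

lemma two_nsmul_eq_of_gcd_eq {D : ℤ} (hD : Squarefree D) {Q : ℕ} [NeZero Q] {x₀ x y : ZMod Q}
    (hx₀ : x₀ ^ 2 = D) (hx : x ^ 2 = D) (hy : y ^ 2 = D)
    (hgcd : Int.gcd Q (x.val - x₀.val) = Int.gcd Q (y.val - x₀.val)) : 2 • x = 2 • y := by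
  have dvd_sub_sq {z : ZMod Q} (hz : z ^ 2 = D) : (Q : ℤ) ∣ D - (z.val : ℤ) ^ 2 := by
    rw [← ZMod.intCast_eq_intCast_iff_dvd_sub]
    simpa using hz
  have hdvd : (Q : ℤ) ∣ 2 * ((x.val : ℤ) - y.val) :=
    dvd_two_mul_sub_of_gcd_eq hD (NeZero.ne _) (dvd_sub_sq hx₀) (dvd_sub_sq hx) (dvd_sub_sq hy)
      (by simp only [← Int.coe_gcd, hgcd])
  rw [← sub_eq_zero, ← smul_sub]
  simpa using (ZMod.intCast_zmod_eq_zero_iff_dvd _ Q).2 hdvd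

lemma card_sqrt_zmod_le {D : ℤ} (hD : Squarefree D) (Q : ℕ) [NeZero Q] :
    #{x : ZMod Q | x ^ 2 = D} ≤ 2 * #Q.divisors := by
  set S : Finset (ZMod Q) := {x | x ^ 2 = D} with hS
  have sq_eq {x : ZMod Q} (hx : x ∈ S) : x ^ 2 = D := by simpa [hS] using hx
  obtain h | ⟨x₀, hx₀⟩ := S.eq_empty_or_nonempty
  · simp [h]
  refine card_le_mul_card_image_of_maps_to
    (f := fun x => Int.gcd Q (x.val - x₀.val)) (fun x _ => ?_) 2 fun d _ => ?_
  · exact Nat.mem_divisors.2 ⟨Int.natCast_dvd_natCast.1 (Int.gcd_dvd_left _ _), NeZero.ne Q⟩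
  obtain h | ⟨c, hc⟩ := {x ∈ S | Int.gcd Q (x.val - x₀.val) = d}.eq_empty_or_nonempty
  · rw [h, card_empty]
    exact Nat.zero_le 2
  refine (card_le_card fun x hx => ?_).trans (card_filter_nsmul_eq_nsmul_le two_pos c)
  obtain ⟨⟨hcS, hcd⟩, hxS, hxd⟩ := And.intro (mem_filter.1 hc) (mem_filter.1 hx)
  exact mem_filter.2 ⟨mem_univ x, two_nsmul_eq_of_gcd_eq hD (sq_eq hx₀) (sq_eq hxS) (sq_eq hcS)
    (hxd.trans hcd.symm)⟩

lemma sum_card_divisors_le (M : ℕ) :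
    ((∑ Q ∈ Ioc 0 M, #Q.divisors : ℕ) : ℝ) ≤ M * (1 + Real.log M) := by
  have hsum : ∑ Q ∈ Ioc 0 M, #Q.divisors = ∑ d ∈ Ioc 0 M, M / d := by
    simpa only [ArithmeticFunction.sigma_zero_apply] using
      ArithmeticFunction.sum_Ioc_sigma0_eq_sum_div M
  have hharm : (harmonic M : ℝ) = ∑ d ∈ Ioc 0 M, (d : ℝ)⁻¹ := by
    rw [harmonic_eq_sum_Icc]
    push_cast
    rfl
  calc ((∑ Q ∈ Ioc 0 M, #Q.divisors : ℕ) : ℝ)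
      = ∑ d ∈ Ioc 0 M, ((M / d : ℕ) : ℝ) := by rw [hsum, Nat.cast_sum]
    _ ≤ ∑ d ∈ Ioc 0 M, (M : ℝ) * (d : ℝ)⁻¹ :=
        sum_le_sum fun d _ => Nat.cast_div_le.trans_eq (div_eq_mul_inv _ _)
    _ = M * harmonic M := by rw [hharm, mul_sum]
    _ ≤ M * (1 + Real.log M) := by gcongr; exact harmonic_le_one_add_log M

end Counting

section CompleteQuotients

/-- The map `α ↦ 1 / (α - ⌊α⌋)` carrying each complete quotient of a continued fraction to the
next one. -/
noncomputable def nextQuotient (x : ℝ) : ℝ :=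
  1 / (x - (⌊x⌋ : ℝ))

lemma cfAlpha_eq_iterate_nextQuotient (x : ℝ) (k : ℕ) : cfAlpha x k = nextQuotient^[k] x := by
  induction k with
  | zero => rfl
  | succ k ih => rw [iterate_succ_apply', ← ih]; rfl

theorem cfPeriod_le_ncard {x : ℝ} {S : Set ℝ} (hfin : S.Finite)
    (hmaps : Set.MapsTo nextQuotient S S) (hinj : Set.InjOn nextQuotient S)
    (hx : nextQuotient x ∈ S) : cfPeriod x ≤ S.ncard := by
  have := hfin.fintype
  let f : S → S := hmaps.restrict
  let y : S := ⟨nextQuotient x, hx⟩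
  have hmem : y ∈ periodicPts f := (hmaps.restrict_inj.2 hinj).mem_periodicPts y
  set l := minimalPeriod f y
  have hiter : nextQuotient^[l] (nextQuotient x) = nextQuotient x := by
    have h : (f^[l] y : ℝ) = y := congrArg Subtype.val (isPeriodicPt_minimalPeriod f y)
    rwa [hmaps.iterate_restrict] at h
  have hperiod (k : ℕ) (hk : 1 ≤ k) : cfA x (k + l) = cfA x k := by
    obtain ⟨j, rfl⟩ := Nat.exists_eq_add_of_le' hk
    simp only [cfA, cfAlpha_eq_iterate_nextQuotient]
    rw [add_right_comm, iterate_succ_apply, iterate_add_apply, hiter, iterate_succ_apply]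
  calc cfPeriod x ≤ l := Nat.sInf_le ⟨minimalPeriod_pos_of_mem_periodicPts hmem, hperiod⟩
    _ ≤ Fintype.card S := minimalPeriod_le_card
    _ = S.ncard := Fintype.card_eq_nat_card

end CompleteQuotients

section ReducedSurds

/-- `(P + √D) / Q` is a reduced quadratic irrational, that is, it exceeds `1` and its conjugate
`(P - √D) / Q` lies in `(-1, 0)`; as for all complete quotients of `√D`, `Q` divides `D - P ^ 2`. -/
structure IsReducedPair (D : ℕ) (P : ℤ) (Q : ℕ) : Prop where
  pos : 0 < Q
  dvd : (Q : ℤ) ∣ D - P ^ 2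
  lt_sqrt : (P : ℝ) < √D
  sqrt_lt_add : √D < P + Q
  lt_add_sqrt : (Q : ℝ) < P + √D

/-- The reduced quadratic irrationals `(P + √D) / Q` with `Q ∣ D - P ^ 2`; all complete quotients
of `√D` except `√D` itself lie here. -/
def reducedSurds (D : ℕ) : Set ℝ :=
  {α | ∃ P Q, IsReducedPair D P Q ∧ α = (P + √D) / Q}

variable {D : ℕ}

lemma floor_mul_sub_mem_Ioo {x : ℝ} (hx : Irrational x) (P : ℤ) {Q : ℕ} (hQ : 0 < Q) :
    ((⌊(P + x) / Q⌋ * Q - P : ℤ) : ℝ) ∈ Set.Ioo (x - Q) x := by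
  have hQ' : (0 : ℝ) < Q := mod_cast hQ
  have hle := (le_div_iff₀ hQ').1 (Int.floor_le ((P + x) / Q))
  have hlt := (div_lt_iff₀ hQ').1 (Int.lt_floor_add_one ((P + x) / Q))
  refine ⟨?_, lt_of_le_of_ne ?_ (hx.ne_int _).symm⟩ <;> push_cast <;> linarith

lemma exists_isReducedPair_div_sub_eq {P : ℤ} {Q : ℕ} (hQ : 0 < Q) (hdvd : (Q : ℤ) ∣ D - P ^ 2)
    (hlt : (P : ℝ) < √D) (hsqrt : √D < P + Q) (hQP : (Q : ℝ) < P + √D) :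
    ∃ Q' : ℕ, IsReducedPair D P Q' ∧ Q / (√D - P) = (P + √D) / Q' := by
  have hQ' : (0 : ℝ) < Q := mod_cast hQ
  have hsub : 0 < √D - P := sub_pos.2 hlt
  have hadd : 0 < P + √D := hQ'.trans hQP
  obtain ⟨c, hc⟩ := hdvd
  have hmul : (Q : ℝ) * c = (√D - P) * (P + √D) := by
    have : (D : ℝ) - P ^ 2 = Q * c := mod_cast hc
    linear_combination -this - Real.mul_self_sqrt (Nat.cast_nonneg D)
  have hc_pos : (0 : ℝ) < c := pos_of_mul_pos_right (hmul ▸ mul_pos hsub hadd) hQ'.le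
  lift c to ℕ using mod_cast hc_pos.le
  push_cast at hmul hc_pos
  have sub_lt_c : √D - P < c := by
    refine lt_of_mul_lt_mul_left ?_ hQ'.le
    rw [hmul, mul_comm]
    exact mul_lt_mul_of_pos_left hQP hsub
  have c_lt_add : (c : ℝ) < P + √D := by
    refine lt_of_mul_lt_mul_left ?_ hQ'.le
    rw [hmul]
    exact mul_lt_mul_of_pos_right (by linarith) hadd
  refine ⟨c, ⟨mod_cast hc_pos, ⟨Q, by rw [hc, mul_comm]⟩, hlt, by linarith, c_lt_add⟩, ?_⟩
  rw [div_eq_div_iff hsub.ne' hc_pos.ne', hmul, mul_comm]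

lemma nextQuotient_mem_reducedSurds (hD : Irrational √D) {P : ℤ} {Q : ℕ} (hQ : 0 < Q)
    (hdvd : (Q : ℤ) ∣ D - P ^ 2) (hlt : (P : ℝ) < √D) (hQP : (Q : ℝ) < P + √D) :
    nextQuotient ((P + √D) / Q) ∈ reducedSurds D := by
  have hQ' : (0 : ℝ) < Q := mod_cast hQ
  obtain ⟨hgt', hlt'⟩ := floor_mul_sub_mem_Ioo hD P hQ
  set a := ⌊(P + √D) / Q⌋ with ha
  have ha_one : (1 : ℝ) ≤ a := by
    have : 1 ≤ a := Int.le_floor.2 (by rw [Int.cast_one, one_le_div hQ']; exact hQP.le)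
    exact_mod_cast this
  have hdvd' : (Q : ℤ) ∣ D - (a * Q - P) ^ 2 := by
    have : (D : ℤ) - (a * Q - P) ^ 2 = D - P ^ 2 + Q * (2 * a * P - a ^ 2 * Q) := by ring
    exact this ▸ dvd_add hdvd (dvd_mul_right _ _)
  obtain ⟨Q₁, hred, heq⟩ := exists_isReducedPair_div_sub_eq hQ hdvd' hlt' (by linarith)
    (by push_cast; nlinarith)
  refine ⟨_, Q₁, hred, ?_⟩
  have hfract : (P + √D) / Q - a = (√D - (a * Q - P : ℤ)) / Q := by
    push_cast
    field_simp
    ring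
  rw [← heq, nextQuotient, ← ha, hfract, one_div_div]

lemma nextQuotient_sqrt_mem_reducedSurds (hD : Irrational √D) :
    nextQuotient √D ∈ reducedSurds D := by
  have hD_one : 1 < D := by
    by_contra! h
    interval_cases D <;> simp at hD
  have hsqrt : 1 < √D := Real.lt_sqrt_of_sq_lt (mod_cast by simpa using hD_one)
  simpa using nextQuotient_mem_reducedSurds hD (P := 0) (Q := 1) one_pos (by simp)
    (by simpa using one_pos.trans hsqrt) (by simpa using hsqrt)

lemma mapsTo_nextQuotient_reducedSurds (hD : Irrational √D) :
    Set.MapsTo nextQuotient (reducedSurds D) (reducedSurds D) := by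
  rintro _ ⟨P, Q, h, rfl⟩
  exact nextQuotient_mem_reducedSurds hD h.pos h.dvd h.lt_sqrt h.lt_add_sqrt

lemma injOn_nextQuotient_reducedSurds (hD : Irrational √D) :
    Set.InjOn nextQuotient (reducedSurds D) := by
  rintro _ ⟨P₁, Q₁, h₁, rfl⟩ _ ⟨P₂, Q₂, h₂, rfl⟩ heq
  obtain ⟨z, hz⟩ := Int.fract_eq_fract.1 (inv_injective (by simpa [nextQuotient] using heq))
  have hQ₁ : (0 : ℝ) < Q₁ := mod_cast h₁.pos
  have hQ₂ : (0 : ℝ) < Q₂ := mod_cast h₂.pos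
  rw [div_sub_div _ _ hQ₁.ne' hQ₂.ne', div_eq_iff (by positivity)] at hz
  obtain rfl : Q₁ = Q₂ := by
    by_contra hne
    have hne' : (Q₂ : ℤ) - Q₁ ≠ 0 := sub_ne_zero.2 (mod_cast Ne.symm hne)
    refine (hD.mul_intCast hne').ne_int (z * (Q₁ * Q₂) + Q₁ * P₂ - P₁ * Q₂) ?_
    push_cast
    linear_combination hz
  have hdvd : (Q₁ : ℤ) ∣ P₁ - P₂ := by
    have : (P₁ : ℝ) - P₂ = Q₁ * z := mul_right_cancel₀ hQ₁.ne' (by linear_combination hz)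
    exact ⟨z, mod_cast this⟩
  have hdist : |(P₁ : ℝ) - P₂| < Q₁ :=
    abs_lt.2 ⟨by linarith [h₂.lt_sqrt, h₁.sqrt_lt_add], by linarith [h₁.lt_sqrt, h₂.sqrt_lt_add]⟩
  rw [sub_eq_zero.1 (Int.eq_zero_of_abs_lt_dvd hdvd (mod_cast hdist))]

/-- The square roots of `D` modulo `Q` in a window of length `Q` which contains the numerator `P` of
every reduced `(P + √D) / Q`. -/
noncomputable def numerators (D Q : ℕ) : Finset ℤ :=
  {P ∈ Ioc (⌊√D⌋ - Q) ⌊√D⌋ | (Q : ℤ) ∣ D - P ^ 2}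

lemma card_numerators_le (hD : Squarefree D) {Q : ℕ} (hQ : 0 < Q) :
    #(numerators D Q) ≤ 2 * #Q.divisors := by
  have : NeZero Q := ⟨hQ.ne'⟩
  refine (card_le_card_of_injOn (fun P : ℤ => (P : ZMod Q)) (fun P hP => ?_) ?_).trans
    (card_sqrt_zmod_le (Int.squarefree_natCast.2 hD) Q)
  · have hdvd := (mem_filter.1 hP).2
    rw [← ZMod.intCast_eq_intCast_iff_dvd_sub] at hdvd
    simpa using hdvd
  · intro P₁ h₁ P₂ h₂ heq
    simp only [numerators, coe_filter, mem_Ioc, Set.mem_ofPred_eq] at h₁ h₂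
    refine sub_eq_zero.1 (Int.eq_zero_of_abs_lt_dvd
      ((ZMod.intCast_eq_intCast_iff_dvd_sub P₂ P₁ Q).1 heq.symm) ?_)
    rw [abs_lt]
    omega

lemma reducedSurds_subset (D : ℕ) :
    reducedSurds D ⊆ ((Ioc 0 ⌊2 * √D⌋₊).biUnion fun Q : ℕ =>
      (numerators D Q).image fun P : ℤ => ((P : ℝ) + √D) / Q : Finset ℝ) := by
  rintro _ ⟨P, Q, h, rfl⟩
  refine mem_coe.2 (mem_biUnion.2 ⟨Q, ?_, mem_image_of_mem _ (mem_filter.2 ⟨?_, h.dvd⟩)⟩)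
  · exact mem_Ioc.2 ⟨h.pos, Nat.le_floor (by linarith [h.lt_add_sqrt, h.lt_sqrt])⟩
  · have hfloor : ⌊√D⌋ < P + Q := Int.floor_lt.2 (mod_cast h.sqrt_lt_add)
    exact mem_Ioc.2 ⟨by linarith, Int.le_floor.2 h.lt_sqrt.le⟩

lemma finite_reducedSurds (D : ℕ) : (reducedSurds D).Finite :=
  (finite_toSet _).subset (reducedSurds_subset D)

lemma ncard_reducedSurds_le (hD : Squarefree D) :
    (reducedSurds D).ncard ≤ 2 * ∑ Q ∈ Ioc 0 ⌊2 * √D⌋₊, #Q.divisors := by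
  refine (Set.ncard_le_ncard (reducedSurds_subset D) (finite_toSet _)).trans ?_
  rw [Set.ncard_coe_finset, mul_sum]
  exact card_biUnion_le.trans <| sum_le_sum fun Q hQ =>
    card_image_le.trans (card_numerators_le hD (mem_Ioc.1 hQ).1)

theorem cfPeriod_sqrt_le_ncard_reducedSurds (hD : Irrational √D) :
    cfPeriod √D ≤ (reducedSurds D).ncard :=
  cfPeriod_le_ncard (finite_reducedSurds D) (mapsTo_nextQuotient_reducedSurds hD)
    (injOn_nextQuotient_reducedSurds hD) (nextQuotient_sqrt_mem_reducedSurds hD)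

lemma irrational_sqrt_of_squarefree (hD : Squarefree D) (hD_one : 1 < D) : Irrational √D := by
  refine irrational_sqrt_natCast_iff.2 ?_
  rintro ⟨r, rfl⟩
  simp [Nat.isUnit_iff.1 (hD r dvd_rfl)] at hD_one

theorem cfPeriod_sqrt_le_of_squarefree (hD : Squarefree D) (hD_one : 1 < D) :
    (cfPeriod √D : ℝ) ≤ 14 * √D * Real.log D := by
  have hirr := irrational_sqrt_of_squarefree hD hD_one
  have hD_two : (2 : ℝ) ≤ D := mod_cast hD_one
  have hsqrt : 1 ≤ √D := Real.one_le_sqrt.2 (by linarith)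
  set M := ⌊2 * √D⌋₊
  have hM : (M : ℝ) ≤ 2 * √D := Nat.floor_le (by positivity)
  have hM_one : (1 : ℝ) ≤ M := mod_cast Nat.le_floor (by push_cast; linarith)
  have hlog_two : Real.log 2 ≤ Real.log D := Real.log_le_log two_pos hD_two
  have hlogM : 1 + Real.log M ≤ 7 / 2 * Real.log D := by
    have := Real.log_le_log (by linarith) hM
    rw [Real.log_mul two_ne_zero (by positivity), Real.log_sqrt (by positivity)] at this
    linarith [Real.log_two_gt_d9]
  calc (cfPeriod √D : ℝ)
      ≤ 2 * (∑ Q ∈ Ioc 0 M, #Q.divisors : ℕ) :=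
        mod_cast (cfPeriod_sqrt_le_ncard_reducedSurds hirr).trans (ncard_reducedSurds_le hD)
    _ ≤ 2 * (M * (1 + Real.log M)) := by gcongr; exact sum_card_divisors_le M
    _ ≤ 2 * (2 * √D * (7 / 2 * Real.log D)) := by
        have := Real.log_nonneg hM_one
        gcongr
    _ = 14 * √D * Real.log D := by ring

end ReducedSurds

section PrimeCounting

open Chebyshev

lemma le_five_mul_primeCounting_mul_log {n : ℕ} (hn : 2 ≤ n) :
    (n : ℝ) ≤ 5 * π n * Real.log n := by
  have hn' : (2 : ℝ) ≤ n := mod_cast hn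
  have hlog : 0 ≤ Real.log n := Real.log_natCast_nonneg n
  have hlog_succ : Real.log (n + 1) ≤ 2 * Real.log n := by
    rw [← Nat.cast_two, ← Real.log_pow]
    exact Real.log_le_log (by positivity) (by nlinarith)
  have hπ : (1 : ℝ) ≤ π n := mod_cast Nat.monotone_primeCounting hn
  have hψ : n * Real.log 2 - Real.log (n + 1) ≤ π n * Real.log n :=
    (psi_ge n).trans (psi_le_primeCounting_mul_log n)
  have := mul_le_mul_of_nonneg_right hπ hlog
  have := Real.log_two_gt_d9
  nlinarith

lemma log_le_nine_mul_log_primeCounting {n : ℕ} (hn : 3 ≤ n) :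
    Real.log n ≤ 9 * Real.log (π n) := by
  have hπ : (2 : ℝ) ≤ π n := mod_cast Nat.monotone_primeCounting hn
  have hn₀ : (0 : ℝ) < n := by positivity
  have hlog : Real.log n ≤ 2 * √n := by
    have := Real.log_le_self (Real.sqrt_nonneg n)
    rw [Real.log_sqrt hn₀.le] at this
    linarith
  have hsqrt : √n ≤ 10 * (π n : ℝ) := by
    refine le_of_mul_le_mul_right ?_ (Real.sqrt_pos.2 hn₀)
    calc √n * √n = n := Real.mul_self_sqrt hn₀.le
      _ ≤ 5 * π n * Real.log n := le_five_mul_primeCounting_mul_log (by omega)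
      _ ≤ 5 * π n * (2 * √n) := by gcongr
      _ = 10 * π n * √n := by ring
  have hpow : (n : ℝ) ≤ (π n : ℝ) ^ 9 :=
    calc (n : ℝ) ≤ (10 * (π n : ℝ)) ^ 2 := (Real.sqrt_le_left (by positivity)).1 hsqrt
      _ ≤ 2 ^ 7 * (π n : ℝ) ^ 2 := by nlinarith
      _ ≤ (π n : ℝ) ^ 7 * (π n : ℝ) ^ 2 := by gcongr
      _ = (π n : ℝ) ^ 9 := by ring
  calc Real.log n ≤ Real.log ((π n : ℝ) ^ 9) := Real.log_le_log hn₀ hpow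
    _ = 9 * Real.log (π n) := by rw [Real.log_pow, Nat.cast_ofNat]

lemma sqrt_le_seven_mul_sqrt_primeCounting_mul_log {n : ℕ} (hn : 3 ≤ n) :
    √n ≤ 7 * (√(π n) * √(Real.log (π n))) := by
  rw [← Real.sqrt_mul (by positivity), Real.sqrt_le_left (by positivity), mul_pow,
    Real.sq_sqrt (by positivity)]
  calc (n : ℝ) ≤ 5 * π n * Real.log n := le_five_mul_primeCounting_mul_log (by omega)
    _ ≤ 5 * π n * (9 * Real.log (π n)) := by
        gcongr
        exact log_le_nine_mul_log_primeCounting hn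
    _ ≤ 7 ^ 2 * (π n * Real.log (π n)) := by
        have : 0 ≤ π n * Real.log (π n) := by positivity
        linarith

lemma primeCounting_nth_prime (n : ℕ) : π (Nat.nth Nat.Prime n) = n + 1 :=
  Nat.count_nth_succ_of_infinite Nat.infinite_setOfPred_prime n

end PrimeCounting

theorem stmt_18 :
    ∃ C : ℝ, 0 < C ∧ ∀ m : ℕ, 2 ≤ m →
      (cfPeriod (Real.sqrt (Nat.nth Nat.Prime (m - 1))) : ℝ) ≤
        C * Real.sqrt m * (Real.log m) ^ ((3 : ℝ) / 2) := by
  refine ⟨882, by norm_num, fun m hm => ?_⟩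
  set p := Nat.nth Nat.Prime (m - 1)
  have hp : p.Prime := Nat.prime_nth_prime _
  have hp_three : 3 ≤ p := by
    have := Nat.add_two_le_nth_prime (m - 1)
    omega
  have hπ : π p = m := by rw [primeCounting_nth_prime]; omega
  have hlog_pos : 0 < Real.log m := Real.log_pos (mod_cast hm)
  have hlog : Real.log p ≤ 9 * Real.log m := hπ ▸ log_le_nine_mul_log_primeCounting hp_three
  have hsqrt : √p ≤ 7 * (√m * √(Real.log m)) :=
    hπ ▸ sqrt_le_seven_mul_sqrt_primeCounting_mul_log hp_three
  have hrpow : Real.log m ^ ((3 : ℝ) / 2) = √(Real.log m) * Real.log m := by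
    rw [show (3 : ℝ) / 2 = 1 / 2 + 1 by norm_num, Real.rpow_add hlog_pos, Real.rpow_one,
      Real.sqrt_eq_rpow]
  calc (cfPeriod √p : ℝ) ≤ 14 * √p * Real.log p :=
        cfPeriod_sqrt_le_of_squarefree hp.prime.squarefree hp.one_lt
    _ ≤ 14 * (7 * (√m * √(Real.log m))) * (9 * Real.log m) := by gcongr
    _ = 882 * √m * Real.log m ^ ((3 : ℝ) / 2) := by rw [hrpow]; ring
end
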